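/- arXiv:1108.0367 — 4 statements merged into one kernel-verified Lean document; each statement's English description precedes it below -/
import Mathlib

section
/- Fix κ ∈ ℝ. For each element (R,v,f,r) of the Hamilton group Ha(n), define the operator ϱ(R,v,f,r) on functions φ : ℝ^n → ℂ by (ϱ(R,v,f,r)φ)(x) = exp(i κ (r − (1/2)v·f + v·x)) · φ(R⁻¹(x − f)). Then ϱ is a group homomorphism: for all (R',v',f',r'), (R,v,f,r) and every φ : ℝ^n → ℂ, ϱ(R',v',f',r')(ϱ(R,v,f,r)φ) = ϱ(R'R, v'+R'v, f'+R'f, r'+r+(1/2)(v'·(R'f) − f'·(R'v)))φ. -/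
/-- The standard Euclidean inner product on `ℝⁿ`. -/
def dot {n : ℕ} (x y : Fin n → ℝ) : ℝ := ∑ i, x i * y i

/-- For fixed `κ`, the operator `ϱ(R,v,f,r)` on functions `φ : ℝⁿ → ℂ` given by
`(ϱ(R,v,f,r)φ)(x) = exp(i κ (r − (1/2)v·f + v·x)) · φ(R⁻¹(x − f))`. -/
noncomputable def HaOp {n : ℕ} (κ : ℝ) (R : Matrix (Fin n) (Fin n) ℝ)
    (v f : Fin n → ℝ) (r : ℝ) (φ : (Fin n → ℝ) → ℂ) : (Fin n → ℝ) → ℂ :=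
  fun x => Complex.exp (Complex.I * (κ : ℂ) *
      ((r - (1 / 2) * dot v f + dot v x : ℝ) : ℂ)) * φ (R⁻¹.mulVec (x - f))

/-- `ϱ` is a group homomorphism from the Hamilton group `Ha(n)` (with multiplication
`(R',v',f',r')·(R,v,f,r) = (R'R, v'+R'v, f'+R'f, r'+r+(1/2)(v'·(R'f) − f'·(R'v)))`,
`R, R' ∈ SO(n)`) to operators on functions `φ : ℝⁿ → ℂ`. -/
theorem HaOp_homomorphism {n : ℕ} (κ : ℝ) (R' R : Matrix (Fin n) (Fin n) ℝ)
    (hR' : R' ∈ Matrix.specialOrthogonalGroup (Fin n) ℝ)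
    (hR : R ∈ Matrix.specialOrthogonalGroup (Fin n) ℝ)
    (v' f' v f : Fin n → ℝ) (r' r : ℝ) (φ : (Fin n → ℝ) → ℂ) :
    HaOp κ R' v' f' r' (HaOp κ R v f r φ)
      = HaOp κ (R' * R) (v' + R'.mulVec v) (f' + R'.mulVec f)
          (r' + r + (1 / 2) * (dot v' (R'.mulVec f) - dot f' (R'.mulVec v))) φ := by
  have hO : R'.transpose * R' = 1 := by
    have h := (Matrix.mem_specialOrthogonalGroup_iff.1 hR').1
    have h2 := (Matrix.mem_orthogonalGroup_iff' (Fin n) ℝ).1 h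
    simpa [Matrix.star_eq_conjTranspose] using h2
  have hinv : R'⁻¹ = R'.transpose := Matrix.inv_eq_left_inv hO
  have hd : ∀ x y : Fin n → ℝ, dot x y = x ⬝ᵥ y := fun _ _ => rfl
  have hadj : ∀ x y : Fin n → ℝ,
      x ⬝ᵥ R'.transpose.mulVec y = R'.mulVec x ⬝ᵥ y := by
    intro x y
    rw [Matrix.dotProduct_mulVec, Matrix.vecMul_transpose]
  have hiso : ∀ x y : Fin n → ℝ, R'.mulVec x ⬝ᵥ R'.mulVec y = x ⬝ᵥ y := by
    intro x y
    rw [← hadj, Matrix.mulVec_mulVec, hO, Matrix.one_mulVec]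
  funext x
  have hx : (R' * R)⁻¹.mulVec (x - (f' + R'.mulVec f))
      = R⁻¹.mulVec (R'⁻¹.mulVec (x - f') - f) := by
    rw [Matrix.mul_inv_rev, ← Matrix.mulVec_mulVec, ← sub_sub, Matrix.mulVec_sub _ (x - f'),
      hinv, Matrix.mulVec_mulVec f, hO, Matrix.one_mulVec]
  unfold HaOp
  rw [hx, ← mul_assoc, ← Complex.exp_add, ← mul_add, ← Complex.ofReal_add]
  congr 4
  simp only [hd, hinv, hadj, dotProduct_sub, add_dotProduct, dotProduct_add, hiso]
  rw [dotProduct_comm f' (R'.mulVec v)]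
  ring
end

section
/- The set of real (n+3)×(n+3) matrices of the block form M(R,v,q,t,s) = [[R, v, 0, q],[0, 1, 0, t],[vᵀR, v²/2, 1, s],[0, 0, 0, 1]] with R ∈ SO(n), v,q ∈ ℝ^n, t,s ∈ ℝ is closed under matrix multiplication, and the product realizes the Galilei group law: M(R',v',q',t',s')·M(R,v,q,t,s) = M(R'R, v'+R'v, q'+R'q+v't, t'+t, s'+s+v'·(R'q)+(1/2)t|v'|²). -/
/-- The `(n+3)×(n+3)` real matrix
`M(R,v,q,t,s) = [[R, v, 0, q],[0, 1, 0, t],[vᵀR, v²/2, 1, s],[0, 0, 0, 1]]`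
(indexed by `Fin n ⊕ Fin 3`), realizing the central extension of the Galilei group. -/
noncomputable def GalM {n : ℕ} (R : Matrix (Fin n) (Fin n) ℝ) (v q : Fin n → ℝ)
    (t s : ℝ) : Matrix (Fin n ⊕ Fin 3) (Fin n ⊕ Fin 3) ℝ :=
  Matrix.of fun i j =>
    match i, j with
    | Sum.inl i, Sum.inl j => R i j
    | Sum.inl i, Sum.inr j => if j = 0 then v i else if j = 1 then 0 else q i
    | Sum.inr i, Sum.inl j => if i = 1 then ∑ k, v k * R k j else 0
    | Sum.inr i, Sum.inr j =>
        if i = 0 then (if j = 0 then 1 else if j = 1 then 0 else t)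
        else if i = 1 then (if j = 0 then dot v v / 2 else if j = 1 then 1 else s)
        else (if j = 2 then 1 else 0)

theorem gal_dot_eq {n : ℕ} (x y : Fin n → ℝ) : dot x y = x ⬝ᵥ y := rfl

theorem gal_orth_dot {n : ℕ} (R : Matrix (Fin n) (Fin n) ℝ)
    (h : R.transpose * R = 1) (x y : Fin n → ℝ) :
    (R.mulVec x) ⬝ᵥ (R.mulVec y) = x ⬝ᵥ y := by
  rw [Matrix.dotProduct_mulVec, ← Matrix.mulVec_transpose, Matrix.mulVec_mulVec, h,
    Matrix.one_mulVec]

theorem gal_mul {n : ℕ} (R' R : Matrix (Fin n) (Fin n) ℝ) (h : R'.transpose * R' = 1)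
    (v' q' v q : Fin n → ℝ) (t' s' t s : ℝ) :
    GalM R' v' q' t' s' * GalM R v q t s
      = GalM (R' * R) (v' + R'.mulVec v) (q' + R'.mulVec q + t • v') (t' + t)
          (s' + s + dot v' (R'.mulVec q) + (1 / 2) * t * dot v' v') := by
  have hv : ∀ (w : Fin n → ℝ) (A : Matrix (Fin n) (Fin n) ℝ) (j : Fin n),
      ∑ k, w k * A k j = Matrix.vecMul w A j := fun _ _ _ => rfl
  have hm : ∀ (w : Fin n → ℝ) (A : Matrix (Fin n) (Fin n) ℝ) (j : Fin n),
      ∑ k, A j k * w k = Matrix.mulVec A w j := fun _ _ _ => rfl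
  have hd : ∀ (x y : Fin n → ℝ), ∑ k, x k * y k = x ⬝ᵥ y := fun _ _ => rfl
  ext i j
  rw [Matrix.mul_apply, Fintype.sum_sum_type, Fin.sum_univ_three]
  rcases i with i | i <;> rcases j with j | j
  · simp [GalM, Matrix.mul_apply]
  · fin_cases j
    · simp [GalM, hm]; ring
    · simp [GalM]
    · simp [GalM, hm]; ring
  · fin_cases i
    · simp [GalM]
    · simp only [GalM, Matrix.of_apply, hv]
      have e : Matrix.vecMul (R'.mulVec v) (R' * R) = Matrix.vecMul v R := by
        rw [← Matrix.vecMul_transpose, Matrix.vecMul_vecMul, ← Matrix.mul_assoc, h,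
          Matrix.one_mul]
      simp [hv, Matrix.add_vecMul, e]
    · simp [GalM]
  · have e := gal_orth_dot R' h v v
    have c : R'.mulVec v ⬝ᵥ v' = v' ⬝ᵥ R'.mulVec v := dotProduct_comm _ _
    fin_cases i <;> fin_cases j <;>
      simp [GalM, hv, hd, gal_dot_eq, Matrix.dotProduct_mulVec, add_dotProduct, dotProduct_add] <;>
      (try simp only [← Matrix.dotProduct_mulVec]) <;> (try rw [add_dotProduct, e, c]) <;> ring

/-- The set of matrices `M(R,v,q,t,s)` with `R ∈ SO(n)` is closed under matrix
multiplication, and the matrix product realizes the Galilei group law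
`M(R',v',q',t',s')·M(R,v,q,t,s)
  = M(R'R, v'+R'v, q'+R'q+v't, t'+t, s'+s+v'·(R'q)+(1/2)t|v'|²)`. -/
theorem galilei_matrix_realization {n : ℕ} :
    (∀ (R' R : Matrix (Fin n) (Fin n) ℝ),
      R' ∈ Matrix.specialOrthogonalGroup (Fin n) ℝ →
      R ∈ Matrix.specialOrthogonalGroup (Fin n) ℝ →
      ∀ (v' q' v q : Fin n → ℝ) (t' s' t s : ℝ),
        GalM R' v' q' t' s' * GalM R v q t s
          = GalM (R' * R) (v' + R'.mulVec v) (q' + R'.mulVec q + t • v') (t' + t)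
              (s' + s + dot v' (R'.mulVec q) + (1 / 2) * t * dot v' v')) ∧
    (∀ A B : Matrix (Fin n ⊕ Fin 3) (Fin n ⊕ Fin 3) ℝ,
      (∃ R ∈ Matrix.specialOrthogonalGroup (Fin n) ℝ, ∃ (v q : Fin n → ℝ) (t s : ℝ),
        A = GalM R v q t s) →
      (∃ R ∈ Matrix.specialOrthogonalGroup (Fin n) ℝ, ∃ (v q : Fin n → ℝ) (t s : ℝ),
        B = GalM R v q t s) →
      (∃ R ∈ Matrix.specialOrthogonalGroup (Fin n) ℝ, ∃ (v q : Fin n → ℝ) (t s : ℝ),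
        A * B = GalM R v q t s)) := by
  have horth : ∀ R : Matrix (Fin n) (Fin n) ℝ,
      R ∈ Matrix.specialOrthogonalGroup (Fin n) ℝ → R.transpose * R = 1 := by
    intro R hR
    have h1 := (Matrix.mem_specialOrthogonalGroup_iff.mp hR).1
    exact (Matrix.mem_orthogonalGroup_iff' (Fin n) ℝ).mp h1
  refine ⟨fun R' R h' _ v' q' v q t' s' t s => gal_mul R' R (horth R' h') v' q' v q t' s' t s, ?_⟩
  rintro A B ⟨R', h', v', q', t', s', rfl⟩ ⟨R, h, v, q, t, s, rfl⟩
  exact ⟨R' * R, mul_mem h' h, _, _, _, _, gal_mul R' R (horth R' h') v' q' v q t' s' t s⟩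
end

section
/- The set of real (2n+3)×(2n+3) matrices of the block form M(R,v,f,r,q,t,p,ε) = [[R, 0, 0, f, p],[0, R, 0, v, q],[vᵀR, −fᵀR, 1, r, ε],[0, 0, 0, 1, t],[0, 0, 0, 0, 1]] with R ∈ SO(n), v,f,q,p ∈ ℝ^n and r,t,ε ∈ ℝ is closed under matrix multiplication, and the product realizes the inhomogeneous Hamilton group law: M(R',v',f',r',q',t',p',ε')·M(R,v,f,r,q,t,p,ε) = M(R'R, v'+R'v, f'+R'f, r'+r+v'·(R'f)−f'·(R'v), q'+R'q+v't, t'+t, p'+R'p+f't, ε'+ε+v'·(R'p)−f'·(R'q)+r't). -/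
/-- The `(2n+3)×(2n+3)` real matrix
`M(R,v,f,r,q,t,p,ε) = [[R,0,0,f,p],[0,R,0,v,q],[vᵀR,−fᵀR,1,r,ε],[0,0,0,1,t],[0,0,0,0,1]]`
(indexed by `Fin n ⊕ Fin n ⊕ Fin 3`), realizing the inhomogeneous Hamilton group. -/
noncomputable def IHaM {n : ℕ} (R : Matrix (Fin n) (Fin n) ℝ) (v f : Fin n → ℝ)
    (r : ℝ) (q : Fin n → ℝ) (t : ℝ) (p : Fin n → ℝ) (ε : ℝ) :
    Matrix (Fin n ⊕ Fin n ⊕ Fin 3) (Fin n ⊕ Fin n ⊕ Fin 3) ℝ :=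
  Matrix.of fun i j =>
    match i, j with
    | Sum.inl i, Sum.inl j => R i j
    | Sum.inl _, Sum.inr (Sum.inl _) => 0
    | Sum.inl i, Sum.inr (Sum.inr c) => if c = 0 then 0 else if c = 1 then f i else p i
    | Sum.inr (Sum.inl _), Sum.inl _ => 0
    | Sum.inr (Sum.inl i), Sum.inr (Sum.inl j) => R i j
    | Sum.inr (Sum.inl i), Sum.inr (Sum.inr c) =>
        if c = 0 then 0 else if c = 1 then v i else q i
    | Sum.inr (Sum.inr k), Sum.inl j => if k = 0 then ∑ m, v m * R m j else 0
    | Sum.inr (Sum.inr k), Sum.inr (Sum.inl j) =>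
        if k = 0 then -∑ m, f m * R m j else 0
    | Sum.inr (Sum.inr k), Sum.inr (Sum.inr c) =>
        if k = 0 then (if c = 0 then 1 else if c = 1 then r else ε)
        else if k = 1 then (if c = 0 then 0 else if c = 1 then 1 else t)
        else (if c = 2 then 1 else 0)

lemma ham_row {n : ℕ} (R' R : Matrix (Fin n) (Fin n) ℝ) (h : R'.transpose * R' = 1)
    (v' v : Fin n → ℝ) (j : Fin n) :
    ∑ m, (v' + R'.mulVec v) m * (R' * R) m j
      = ∑ k, (∑ m, v' m * R' m k) * R k j + ∑ m, v m * R m j := by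
  have h1 : Matrix.vecMul (v' + R'.mulVec v) (R' * R)
      = Matrix.vecMul (Matrix.vecMul v' R') R + Matrix.vecMul v R := by
    rw [Matrix.add_vecMul, Matrix.vecMul_vecMul, ← Matrix.vecMul_transpose,
      Matrix.vecMul_vecMul, ← Matrix.mul_assoc, h, Matrix.one_mul]
  exact congrFun h1 j

lemma ham_dot {n : ℕ} (R : Matrix (Fin n) (Fin n) ℝ) (v f : Fin n → ℝ) :
    ∑ k, (∑ m, v m * R m k) * f k = dot v (R.mulVec f) :=
  (Matrix.dotProduct_mulVec v R f).symm

lemma ham_mul {n : ℕ} (R' R : Matrix (Fin n) (Fin n) ℝ) (h : R'.transpose * R' = 1)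
    (v' f' q' p' v f q p : Fin n → ℝ) (r' t' ε' r t ε : ℝ) :
        IHaM R' v' f' r' q' t' p' ε' * IHaM R v f r q t p ε
          = IHaM (R' * R) (v' + R'.mulVec v) (f' + R'.mulVec f)
              (r' + r + dot v' (R'.mulVec f) - dot f' (R'.mulVec v))
              (q' + R'.mulVec q + t • v') (t' + t) (p' + R'.mulVec p + t • f')
              (ε' + ε + dot v' (R'.mulVec p) - dot f' (R'.mulVec q) + r' * t) := by
  ext i j
  rw [Matrix.mul_apply, Fintype.sum_sum_type, Fintype.sum_sum_type, Fin.sum_univ_three]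
  have e : ∀ (w : Fin n → ℝ) i, R'.mulVec w i = ∑ k, R' i k * w k := fun w i => rfl
  rcases i with i | i | i <;> rcases j with j | j | j
  · simp [IHaM, Matrix.mul_apply]
  · simp [IHaM]
  · fin_cases j <;> simp [IHaM, e] <;> ring
  · simp [IHaM]
  · simp [IHaM, Matrix.mul_apply]
  · fin_cases j <;> simp [IHaM, e] <;> ring
  · fin_cases i
    · simp only [IHaM, Matrix.of_apply, Fin.zero_eta, ham_row R' R h]
      simp
    · simp [IHaM]
    · simp [IHaM]
  · fin_cases i
    · simp only [IHaM, Matrix.of_apply, Fin.zero_eta, ham_row R' R h]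
      simp
      ring
    · simp [IHaM]
    · simp [IHaM]
  · fin_cases i <;> fin_cases j <;> simp [IHaM, ham_dot] <;> ring

/-- The set of matrices `M(R,v,f,r,q,t,p,ε)` with `R ∈ SO(n)` is closed under matrix
multiplication, and the matrix product realizes the inhomogeneous Hamilton group law
`M(R',v',f',r',q',t',p',ε')·M(R,v,f,r,q,t,p,ε)
  = M(R'R, v'+R'v, f'+R'f, r'+r+v'·(R'f)−f'·(R'v), q'+R'q+v't, t'+t, p'+R'p+f't,
      ε'+ε+v'·(R'p)−f'·(R'q)+r't)`. -/
theorem inhomogeneous_hamilton_matrix_realization {n : ℕ} :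
    (∀ (R' R : Matrix (Fin n) (Fin n) ℝ),
      R' ∈ Matrix.specialOrthogonalGroup (Fin n) ℝ →
      R ∈ Matrix.specialOrthogonalGroup (Fin n) ℝ →
      ∀ (v' f' q' p' v f q p : Fin n → ℝ) (r' t' ε' r t ε : ℝ),
        IHaM R' v' f' r' q' t' p' ε' * IHaM R v f r q t p ε
          = IHaM (R' * R) (v' + R'.mulVec v) (f' + R'.mulVec f)
              (r' + r + dot v' (R'.mulVec f) - dot f' (R'.mulVec v))
              (q' + R'.mulVec q + t • v') (t' + t) (p' + R'.mulVec p + t • f')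
              (ε' + ε + dot v' (R'.mulVec p) - dot f' (R'.mulVec q) + r' * t)) ∧
    (∀ A B : Matrix (Fin n ⊕ Fin n ⊕ Fin 3) (Fin n ⊕ Fin n ⊕ Fin 3) ℝ,
      (∃ R ∈ Matrix.specialOrthogonalGroup (Fin n) ℝ,
        ∃ (v f q p : Fin n → ℝ) (r t ε : ℝ), A = IHaM R v f r q t p ε) →
      (∃ R ∈ Matrix.specialOrthogonalGroup (Fin n) ℝ,
        ∃ (v f q p : Fin n → ℝ) (r t ε : ℝ), B = IHaM R v f r q t p ε) →
      (∃ R ∈ Matrix.specialOrthogonalGroup (Fin n) ℝ,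
        ∃ (v f q p : Fin n → ℝ) (r t ε : ℝ), A * B = IHaM R v f r q t p ε)) := by
  have key : ∀ R' : Matrix (Fin n) (Fin n) ℝ,
      R' ∈ Matrix.specialOrthogonalGroup (Fin n) ℝ → R'.transpose * R' = 1 := by
    intro R' h
    exact (Matrix.mem_orthogonalGroup_iff' (Fin n) ℝ).1 (Matrix.mem_specialOrthogonalGroup_iff.1 h).1
  refine ⟨fun R' R h' _ v' f' q' p' v f q p r' t' ε' r t ε =>
    ham_mul R' R (key R' h') v' f' q' p' v f q p r' t' ε' r t ε, ?_⟩
  rintro A B ⟨R', h', v', f', q', p', r', t', ε', rfl⟩ ⟨R, h, v, f, q, p, r, t, ε, rfl⟩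
  exact ⟨R' * R, mul_mem h' h, _, _, _, _, _, _, _,
    ham_mul R' R (key R' h') v' f' q' p' v f q p r' t' ε' r t ε⟩
end

section
/- For the matrices M(R,v,f,r,q,t,p,ε) = [[R, 0, 0, f, p],[0, R, 0, v, q],[vᵀR, −fᵀR, 1, r, ε],[0, 0, 0, 1, t],[0, 0, 0, 0, 1]] with R ∈ SO(n), v,f,q,p ∈ ℝ^n and r,t,ε ∈ ℝ, each such matrix is invertible and its inverse is again of this form with parameters M(R,v,f,r,q,t,p,ε)⁻¹ = M(R⁻¹, −R⁻¹v, −R⁻¹f, −r, −R⁻¹(q−tv), −t, −R⁻¹(p−tf), −ε+v·p−f·q+rt). -/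
lemma IHaM_mul {n : ℕ} (R S : Matrix (Fin n) (Fin n) ℝ) (hRS : R * S = 1) (hT : S = R.transpose)
    (v f q p : Fin n → ℝ) (r t ε : ℝ) :
    IHaM R v f r q t p ε * IHaM S (-(S.mulVec v)) (-(S.mulVec f)) (-r)
          (-(S.mulVec (q - t • v))) (-t) (-(S.mulVec (p - t • f)))
          (-ε + dot v p - dot f q + r * t) = 1 := by
  have h1 : ∀ i j, ∑ x, R i x * S x j = (1 : Matrix (Fin n) (Fin n) ℝ) i j := by
    intro i j; rw [← hRS, Matrix.mul_apply]
  have h2 : ∀ (w : Fin n → ℝ) i, ∑ x, R i x * (S.mulVec w) x = w i := by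
    intro w i
    have : R.mulVec (S.mulVec w) i = w i := by
      rw [Matrix.mulVec_mulVec, hRS, Matrix.one_mulVec]
    exact this
  have h3 : ∀ (w : Fin n → ℝ) j, ∑ x, (∑ m, w m * R m x) * S x j = w j := by
    intro w j
    have : Matrix.vecMul (Matrix.vecMul w R) S j = w j := by
      rw [Matrix.vecMul_vecMul, hRS, Matrix.vecMul_one]
    exact this
  have h4 : ∀ (w : Fin n → ℝ) j, ∑ x, (S.mulVec w) x * S x j = w j := by
    intro w j
    have : Matrix.vecMul (S.mulVec w) S j = w j := by
      have e : S.mulVec w = Matrix.vecMul w R := by rw [hT, Matrix.mulVec_transpose]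
      rw [e, Matrix.vecMul_vecMul, hRS, Matrix.vecMul_one]
    exact this
  have h5 : ∀ (w u : Fin n → ℝ), ∑ x, (∑ m, w m * R m x) * (S.mulVec u) x = dot w u := by
    intro w u
    have : Matrix.vecMul w R ⬝ᵥ S.mulVec u = w ⬝ᵥ u := by
      rw [← Matrix.dotProduct_mulVec, Matrix.mulVec_mulVec, hRS, Matrix.one_mulVec]
    exact this
  have h6 : ∀ (w u x : Fin n → ℝ), dot w (u - t • x) = dot w u - t * dot w x := by
    intro w u x
    simp only [dot, Pi.sub_apply, Pi.smul_apply, smul_eq_mul, Finset.mul_sum,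
      ← Finset.sum_sub_distrib]
    exact Finset.sum_congr rfl fun _ _ => by ring
  have h7 : dot v f = dot f v := by
    simp only [dot, mul_comm]
  ext i j
  rcases i with i | i | i <;> rcases j with j | j | j <;>
    rw [Matrix.mul_apply, Fintype.sum_sum_type, Fintype.sum_sum_type, Fin.sum_univ_three] <;>
    (try fin_cases i) <;> (try fin_cases j) <;>
    simp [IHaM, Matrix.one_apply, Finset.sum_neg_distrib, h1, h2, h3, h4, h5, h6, h7] <;>
    linarith

/-- Each matrix `M(R,v,f,r,q,t,p,ε)` with `R ∈ SO(n)` is invertible, and its inverse is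
again of this form:
`M(R,v,f,r,q,t,p,ε)⁻¹ = M(R⁻¹, −R⁻¹v, −R⁻¹f, −r, −R⁻¹(q−tv), −t, −R⁻¹(p−tf),
  −ε+v·p−f·q+rt)`. -/
theorem inhomogeneous_hamilton_matrix_inverse {n : ℕ}
    (R : Matrix (Fin n) (Fin n) ℝ) (hR : R ∈ Matrix.specialOrthogonalGroup (Fin n) ℝ)
    (v f q p : Fin n → ℝ) (r t ε : ℝ) :
    IsUnit (IHaM R v f r q t p ε) ∧
    R⁻¹ ∈ Matrix.specialOrthogonalGroup (Fin n) ℝ ∧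
    (IHaM R v f r q t p ε)⁻¹
      = IHaM R⁻¹ (-(R⁻¹.mulVec v)) (-(R⁻¹.mulVec f)) (-r)
          (-(R⁻¹.mulVec (q - t • v))) (-t) (-(R⁻¹.mulVec (p - t • f)))
          (-ε + dot v p - dot f q + r * t) := by
  obtain ⟨hO, hdet⟩ := Matrix.mem_specialOrthogonalGroup_iff.mp hR
  have hRT : R * R.transpose = 1 := Matrix.mem_orthogonalGroup_iff (Fin n) ℝ |>.mp hO
  have hinv : R⁻¹ = R.transpose := Matrix.inv_eq_right_inv hRT
  have key := IHaM_mul R R⁻¹ (by rw [hinv, hRT]) hinv v f q p r t ε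
  refine ⟨IsUnit.of_mul_eq_one _ key, ?_, Matrix.inv_eq_right_inv key⟩
  rw [hinv, Matrix.mem_specialOrthogonalGroup_iff]
  refine ⟨?_, by rw [Matrix.det_transpose, hdet]⟩
  rw [Matrix.mem_orthogonalGroup_iff]
  have := mul_eq_one_comm.mp hRT
  simpa [Matrix.star_eq_conjTranspose] using this
end
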